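/- Let f : (C^n,0) → (C,0), n ≥ 2, be a singularity which is nondegenerate in the Kouchnirenko sense. If φ = (φ_1,...,φ_n) ∈ C{t}^n is a parametrization with φ(0)=0 and φ_i ≠ 0 for all i, then ∇f ∘ φ ≠ 0 (as a germ of a curve in C^n). -/

import Mathlib

/-!
Each coordinate of the parametrization is `φ_i(t) = c_i t ^ k_i + ...` with `c_i ≠ 0` and
`k_i > 0`. The weights `k` support a compact face `S` of the Newton diagram of `f`, and `f_S` is
the part of `f` of the lowest weighted degree `N` (`exists_facePoly_eq`). If every `∂_i f` vanishes
along `φ`, then the coefficient of `t ^ (N - k_i)` in `∂_i f (φ(t))`, which is `(∂_i f_S)(c)`, is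
zero for every `i`, contradicting nondegeneracy on `S` at the point `c`.

The leading coefficient is computed in `lead_comp`, without a multivariate Taylor expansion: if all
Taylor coefficients of `h` of weighted degree less than `N` vanish, then
`h(φ(t)) = h_N(c) t ^ N + o(t ^ N)`, where `h_N` is the part of `h` of weighted degree `N`. This
goes by induction on `N`: the derivative of `h ∘ φ` is `∑ ∂_i h(φ) φ_i'`, the germs `∂_i h` have
weighted order at least `N - k_i`, and Euler's identity `∑ k_i z_i ∂_i h_N = N h_N` gives the
derivative the leading coefficient `N h_N(c)`; the mean value inequality then integrates it.
-/

open Finset Filter Topology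

/-- The `i`-th partial derivative of `f`. -/
noncomputable def pder {n : ℕ} (i : Fin n) (f : (Fin n → ℂ) → ℂ) : (Fin n → ℂ) → ℂ :=
  fun z => fderiv ℂ f z (Pi.single i 1)

/-- The iterated partial derivative `∂^ν f` for a multi-index `ν`. -/
noncomputable def mder {n : ℕ} (ν : Fin n → ℕ) (f : (Fin n → ℂ) → ℂ) : (Fin n → ℂ) → ℂ :=
  ((List.finRange n).map fun i => (pder i)^[ν i]).foldr (fun g acc => g acc) f

/-- The support of the Taylor expansion of `f` at `0`. -/
def NSupp {n : ℕ} (f : (Fin n → ℂ) → ℂ) : Set (Fin n → ℕ) :=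
  {ν | mder ν f 0 ≠ 0}

/-- The Taylor coefficient `a_ν` of `f` at `0`. -/
noncomputable def coeffOf {n : ℕ} (f : (Fin n → ℂ) → ℂ) (ν : Fin n → ℕ) : ℂ :=
  mder ν f 0 / ((∏ i, (ν i).factorial : ℕ) : ℂ)

/-- The Newton diagram `Γ₊(f)`: the convex hull of `⋃_{ν ∈ supp f} (ν + ℝ₊ⁿ)`. -/
def NDiag {n : ℕ} (f : (Fin n → ℂ) → ℂ) : Set (Fin n → ℝ) :=
  convexHull ℝ {x | ∃ ν ∈ NSupp f, ∀ i, (ν i : ℝ) ≤ x i}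

/-- `l(u, A) = inf {⟨u, v⟩ : v ∈ A}`. -/
noncomputable def ell {n : ℕ} (u : Fin n → ℝ) (A : Set (Fin n → ℝ)) : ℝ :=
  sInf ((fun v => ∑ i, u i * v i) '' A)

/-- The face `Δ(u, A) = {v ∈ A : ⟨u, v⟩ = l(u, A)}`. -/
def faceOf {n : ℕ} (u : Fin n → ℝ) (A : Set (Fin n → ℝ)) : Set (Fin n → ℝ) :=
  {v | v ∈ A ∧ ∑ i, u i * v i = ell u A}

/-- `S` is a compact face of the Newton diagram of `f` (member of the Newton boundary). -/
def IsCompactFace {n : ℕ} (f : (Fin n → ℂ) → ℂ) (S : Set (Fin n → ℝ)) : Prop :=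
  ∃ u : Fin n → ℝ, (∀ i, 0 < u i) ∧ S = faceOf u (NDiag f)

/-- The dimension of a face, as the rank of the direction of its affine span. -/
noncomputable def faceDim {n : ℕ} (S : Set (Fin n → ℝ)) : ℕ :=
  Module.finrank ℝ (affineSpan ℝ S).direction

/-- `Γ^k(f)`: the `k`-dimensional compact faces of the Newton boundary of `f`. -/
def GammaK {n : ℕ} (f : (Fin n → ℂ) → ℂ) (k : ℕ) : Set (Set (Fin n → ℝ)) :=
  {S | IsCompactFace f S ∧ faceDim S = k}

/-- The quasihomogeneous polynomial `f_S = Σ_{ν ∈ S} a_ν z^ν`. -/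
noncomputable def facePoly {n : ℕ} (f : (Fin n → ℂ) → ℂ) (S : Set (Fin n → ℝ)) :
    (Fin n → ℂ) → ℂ :=
  fun z => ∑' ν : {ν : Fin n → ℕ // (fun i => (ν i : ℝ)) ∈ S}, coeffOf f ν.1 * ∏ i, z i ^ ν.1 i

/-- `f` is nondegenerate in the Kouchnirenko sense. -/
def Nondeg {n : ℕ} (f : (Fin n → ℂ) → ℂ) : Prop :=
  ∀ S, IsCompactFace f S →
    ¬∃ z : Fin n → ℂ, (∀ i, z i ≠ 0) ∧ ∀ i, pder i (facePoly f S) z = 0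

/-- `f` is a singularity: a nonzero holomorphic germ with `f 0 = 0`, `∇f 0 = 0`. -/
def IsSing {n : ℕ} (f : (Fin n → ℂ) → ℂ) : Prop :=
  AnalyticAt ℂ f 0 ∧ (¬∀ᶠ z in 𝓝 0, f z = 0) ∧ f 0 = 0 ∧ ∀ i, pder i f 0 = 0

/-- `f` is an isolated singularity: `∇f` has an isolated zero at `0`. -/
def IsIsolSing {n : ℕ} (f : (Fin n → ℂ) → ℂ) : Prop :=
  IsSing f ∧ ∃ r > (0 : ℝ), ∀ z : Fin n → ℂ, ‖z‖ < r → z ≠ 0 → ∃ i, pder i f z ≠ 0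

/-- The order of a one-variable holomorphic germ at `0`. -/
noncomputable def ord1 (φ : ℂ → ℂ) : ℕ := sInf {m | iteratedDeriv m φ 0 ≠ 0}

/-- The initial term `in φ = c·t^{ord φ}` of a one-variable holomorphic germ. -/
noncomputable def ini1 (φ : ℂ → ℂ) : ℂ → ℂ :=
  fun t => (iteratedDeriv (ord1 φ) φ 0 / ((ord1 φ).factorial : ℂ)) * t ^ ord1 φ

/-- `φ` is a parametrization with all coordinates nonzero: each `φ i` is holomorphic
at `0`, vanishes at `0`, and is not identically zero near `0`. -/
def IsParam {n : ℕ} (φ : Fin n → ℂ → ℂ) : Prop :=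
  ∀ i, AnalyticAt ℂ (φ i) 0 ∧ φ i 0 = 0 ∧ ¬∀ᶠ t in 𝓝 (0 : ℂ), φ i t = 0

open Asymptotics

/-! ### Partial derivatives of analytic germs -/

theorem pder_analytic {n : ℕ} {f : (Fin n → ℂ) → ℂ} {x : Fin n → ℂ} (hf : AnalyticAt ℂ f x)
    (i : Fin n) : AnalyticAt ℂ (pder i f) x :=
  ((ContinuousLinearMap.apply ℂ ℂ (Pi.single i (1 : ℂ) : Fin n → ℂ) :
    ((Fin n → ℂ) →L[ℂ] ℂ) →L[ℂ] ℂ).analyticAt _).comp hf.fderiv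

theorem pder_congr {n : ℕ} {f g : (Fin n → ℂ) → ℂ} {x : Fin n → ℂ} (h : f =ᶠ[𝓝 x] g)
    (i : Fin n) : pder i f =ᶠ[𝓝 x] pder i g := by
  filter_upwards [h.fderiv (𝕜 := ℂ)] with z hz
  simp only [pder, hz]

theorem pder_comm {n : ℕ} {f : (Fin n → ℂ) → ℂ} {x : Fin n → ℂ} (hf : AnalyticAt ℂ f x)
    (i j : Fin n) : pder i (pder j f) =ᶠ[𝓝 x] pder j (pder i f) := by
  have key : ∀ z, AnalyticAt ℂ f z → ∀ a b : Fin n,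
      pder a (pder b f) z = fderiv ℂ (fderiv ℂ f) z (Pi.single a 1) (Pi.single b 1) := by
    intro z hz a b
    have := fderiv_clm_apply (𝕜 := ℂ) (x := z) (c := fderiv ℂ f)
      (u := fun _ => (Pi.single b 1 : Fin n → ℂ)) hz.fderiv.differentiableAt
      (differentiableAt_const _)
    have h2 : pder b f = fun y => fderiv ℂ f y (Pi.single b 1) := rfl
    rw [pder, h2, this]
    simp
  filter_upwards [hf.eventually_analyticAt] with z hz
  rw [key z hz, key z hz]
  have hs : IsSymmSndFDerivAt ℂ f z :=
    (hz.contDiffAt (n := 2)).isSymmSndFDerivAt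
      (by rw [minSmoothness_of_isRCLikeNormedField])
  exact hs _ _

/-- The iterated derivative `mder`, with the variables taken from an arbitrary list instead of
the list of all variables. -/
noncomputable def lder {n : ℕ} (l : List (Fin n)) (ν : Fin n → ℕ) (f : (Fin n → ℂ) → ℂ) :
    (Fin n → ℂ) → ℂ :=
  (l.map fun i => (pder i)^[ν i]).foldr (fun g acc => g acc) f

theorem lder_cons {n : ℕ} (j : Fin n) (l : List (Fin n)) (ν : Fin n → ℕ)
    (f : (Fin n → ℂ) → ℂ) : lder (j :: l) ν f = (pder j)^[ν j] (lder l ν f) := rfl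

theorem iter_analytic {n : ℕ} {f : (Fin n → ℂ) → ℂ} {x : Fin n → ℂ} (hf : AnalyticAt ℂ f x)
    (i : Fin n) (m : ℕ) : AnalyticAt ℂ ((pder i)^[m] f) x := by
  induction m with
  | zero => exact hf
  | succ m ih => rw [Function.iterate_succ_apply']; exact pder_analytic ih i

theorem iter_congr {n : ℕ} {f g : (Fin n → ℂ) → ℂ} {x : Fin n → ℂ} (h : f =ᶠ[𝓝 x] g)
    (i : Fin n) (m : ℕ) : (pder i)^[m] f =ᶠ[𝓝 x] (pder i)^[m] g := by
  induction m with
  | zero => exact h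
  | succ m ih => simp only [Function.iterate_succ_apply']; exact pder_congr ih i

theorem iter_comm {n : ℕ} {f : (Fin n → ℂ) → ℂ} {x : Fin n → ℂ} (hf : AnalyticAt ℂ f x)
    (i j : Fin n) (m : ℕ) : (pder i)^[m] (pder j f) =ᶠ[𝓝 x] pder j ((pder i)^[m] f) := by
  induction m with
  | zero => rfl
  | succ m ih =>
    simp only [Function.iterate_succ_apply']
    exact (pder_congr ih i).trans (pder_comm (iter_analytic hf i m) i j)

theorem lder_analytic {n : ℕ} {f : (Fin n → ℂ) → ℂ} {x : Fin n → ℂ} (hf : AnalyticAt ℂ f x)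
    (l : List (Fin n)) (ν : Fin n → ℕ) : AnalyticAt ℂ (lder l ν f) x := by
  induction l with
  | nil => exact hf
  | cons j l ih => rw [lder_cons]; exact iter_analytic ih j _

theorem lder_comm {n : ℕ} {f : (Fin n → ℂ) → ℂ} {x : Fin n → ℂ} (hf : AnalyticAt ℂ f x)
    (l : List (Fin n)) (ν : Fin n → ℕ) (i : Fin n) :
    lder l ν (pder i f) =ᶠ[𝓝 x] pder i (lder l ν f) := by
  induction l with
  | nil => rfl
  | cons j l ih =>
    rw [lder_cons, lder_cons]
    exact (iter_congr ih j _).trans (iter_comm (lder_analytic hf l ν) j i _)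

theorem lder_add_of_notMem {n : ℕ} (f : (Fin n → ℂ) → ℂ) (l : List (Fin n)) (ν : Fin n → ℕ)
    (i : Fin n) (hi : i ∉ l) : lder l (ν + Pi.single i 1) f = lder l ν f := by
  induction l with
  | nil => rfl
  | cons j l ih =>
    simp only [List.mem_cons, not_or] at hi
    rw [lder_cons, lder_cons, ih hi.2]
    simp [Ne.symm hi.1]

theorem lder_add {n : ℕ} {f : (Fin n → ℂ) → ℂ} {x : Fin n → ℂ} (hf : AnalyticAt ℂ f x)
    (l : List (Fin n)) (hl : l.Nodup) (ν : Fin n → ℕ) (i : Fin n) (hi : i ∈ l) :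
    lder l (ν + Pi.single i 1) f =ᶠ[𝓝 x] lder l ν (pder i f) := by
  induction l with
  | nil => simp at hi
  | cons j l ih =>
    rw [List.nodup_cons] at hl
    rw [lder_cons, lder_cons]
    by_cases hij : i = j
    · subst hij
      rw [lder_add_of_notMem f l ν i hl.1]
      have : (ν + Pi.single i 1 : Fin n → ℕ) i = ν i + 1 := by simp
      rw [this, Function.iterate_succ_apply]
      exact iter_congr (lder_comm hf l ν i).symm i _
    · have h1 : (ν + Pi.single i 1 : Fin n → ℕ) j = ν j := by simp [Ne.symm hij]
      rw [h1]
      exact iter_congr (ih hl.2 ((List.mem_cons.1 hi).resolve_left hij)) j _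

theorem mder_pder {n : ℕ} {f : (Fin n → ℂ) → ℂ} (hf : AnalyticAt ℂ f 0)
    (ν : Fin n → ℕ) (i : Fin n) : mder ν (pder i f) 0 = mder (ν + Pi.single i 1) f 0 :=
  (lder_add hf _ (List.nodup_finRange n) ν i (List.mem_finRange i)).eq_of_nhds.symm

theorem mder_zero {n : ℕ} (f : (Fin n → ℂ) → ℂ) : mder 0 f = f := by
  have : ∀ l : List (Fin n), lder l 0 f = f := by
    intro l
    induction l with
    | nil => rfl
    | cons j l ih => rw [lder_cons, ih]; rfl
  exact this _

theorem coeffOf_pder {n : ℕ} {f : (Fin n → ℂ) → ℂ} (hf : AnalyticAt ℂ f 0)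
    (ν : Fin n → ℕ) (i : Fin n) :
    coeffOf (pder i f) ν = (ν i + 1) * coeffOf f (ν + Pi.single i 1) := by
  have hfac : (∏ j, ((ν + Pi.single i 1 : Fin n → ℕ) j).factorial) = (ν i + 1) * ∏ j, (ν j).factorial := by
    rw [← Finset.mul_prod_erase univ _ (mem_univ i), ← Finset.mul_prod_erase univ
      (fun j => (ν j).factorial) (mem_univ i), ← mul_assoc]
    congr 1
    · simp [Nat.factorial_succ]
    · refine Finset.prod_congr rfl fun j hj => ?_
      simp [(Finset.mem_erase.1 hj).1]
  unfold coeffOf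
  rw [mder_pder hf, hfac]
  have h1 : (ν i + 1 : ℂ) ≠ 0 := by exact_mod_cast Nat.succ_ne_zero (ν i)
  have h2 : ((∏ j, (ν j).factorial : ℕ) : ℂ) ≠ 0 := by
    exact_mod_cast Finset.prod_ne_zero_iff.2 fun j _ => Nat.factorial_ne_zero _
  push_cast at h2 ⊢
  field_simp

/-! ### Leading terms of germs in one variable -/

/-- `g(t) = A t ^ N + o(t ^ N)` at `0`. The coefficient `A` may vanish. -/
def Lead (g : ℂ → ℂ) (N : ℕ) (A : ℂ) : Prop :=
  (fun t => g t - A * t ^ N) =o[𝓝 0] fun t : ℂ => t ^ N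

theorem Lead.isBigO {g : ℂ → ℂ} {N : ℕ} {A : ℂ} (h : Lead g N A) :
    g =O[𝓝 0] fun t : ℂ => t ^ N := by
  have := (IsLittleO.isBigO h).add (isBigO_const_mul_self A (fun t : ℂ => t ^ N) (𝓝 0))
  simpa using this

theorem Lead.mul {g h : ℂ → ℂ} {M N : ℕ} {A B : ℂ} (hg : Lead g M A) (hh : Lead h N B) :
    Lead (fun t => g t * h t) (M + N) (A * B) := by
  have h1 := IsLittleO.mul_isBigO hg hh.isBigO
  have h2 := IsBigO.mul_isLittleO (isBigO_const_mul_self A (fun t : ℂ => t ^ M) (𝓝 0)) hh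
  have := h1.add h2
  simp only [← pow_add] at this
  refine this.congr_left fun t => ?_
  rw [pow_add]; ring

theorem Lead.sum {ι : Type*} {s : Finset ι} {g : ι → ℂ → ℂ} {N : ℕ} {A : ι → ℂ}
    (h : ∀ i ∈ s, Lead (g i) N (A i)) : Lead (fun t => ∑ i ∈ s, g i t) N (∑ i ∈ s, A i) := by
  have := IsLittleO.sum h
  refine this.congr_left fun t => ?_
  simp [Finset.sum_sub_distrib, Finset.sum_mul]

theorem Lead.congr {g h : ℂ → ℂ} {N : ℕ} {A : ℂ} (hg : Lead g N A) (e : g =ᶠ[𝓝 0] h) :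
    Lead h N A := by
  refine IsLittleO.congr' hg ?_ EventuallyEq.rfl
  filter_upwards [e] with t ht
  rw [ht]

theorem Lead.of_lt {g : ℂ → ℂ} {M N : ℕ} {A : ℂ} (hg : Lead g M A) (hMN : N < M) :
    Lead g N 0 := by
  have := hg.isBigO.trans_isLittleO (isLittleO_pow_pow (𝕜 := ℂ) hMN)
  simpa [Lead] using this

theorem Lead.eq_zero {g : ℂ → ℂ} {N : ℕ} {A : ℂ} (hg : Lead g N A)
    (h0 : ∀ᶠ t in 𝓝 0, g t = 0) : A = 0 := by
  by_contra hA
  have h1 : (fun t : ℂ => t ^ N) =o[𝓝 0] fun t : ℂ => t ^ N := by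
    have h2 : (fun t : ℂ => A * t ^ N) =o[𝓝 0] fun t : ℂ => t ^ N := by
      refine (IsLittleO.neg_left hg).congr' ?_ EventuallyEq.rfl
      filter_upwards [h0] with t ht
      rw [ht]; ring
    exact (isLittleO_const_mul_left_iff hA).1 h2
  have h3 : (fun t : ℂ => t ^ N) =o[𝓝[≠] 0] fun t : ℂ => t ^ N := h1.mono nhdsWithin_le_nhds
  refine isLittleO_irrefl ?_ h3
  refine Eventually.frequently ?_
  filter_upwards [self_mem_nhdsWithin] with t ht
  exact pow_ne_zero _ ht

theorem Lead.of_continuousAt {g : ℂ → ℂ} (hg : ContinuousAt g 0) : Lead g 0 (g 0) := by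
  simp only [Lead, pow_zero, mul_one]
  rw [isLittleO_one_iff]
  simpa using (hg.tendsto.sub_const (g 0))

/-- Leading terms may be integrated: this is the mean value inequality on small balls. -/
theorem Lead.of_deriv {g g' : ℂ → ℂ} {N : ℕ} {A : ℂ}
    (hd : ∀ᶠ t in 𝓝 0, HasDerivAt g (g' t) t) (h0 : g 0 = 0)
    (h : Lead g' N ((N + 1) * A)) : Lead g (N + 1) A := by
  rw [Lead, isLittleO_iff]
  intro ε hε
  have h' := (isLittleO_iff.1 h) hε
  obtain ⟨r, hr, hball⟩ := Metric.eventually_nhds_iff_ball.1 (hd.and h')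
  filter_upwards [Metric.ball_mem_nhds (0 : ℂ) hr] with t ht
  have ht' : ‖t‖ < r := by simpa using ht
  have hsub : ∀ x ∈ Metric.closedBall (0 : ℂ) ‖t‖, x ∈ Metric.ball (0 : ℂ) r := by
    intro x hx
    have : ‖x‖ ≤ ‖t‖ := by simpa using hx
    simpa using this.trans_lt ht'
  have := (convex_closedBall (0 : ℂ) ‖t‖).norm_image_sub_le_of_norm_hasDerivWithin_le
    (𝕜 := ℂ) (f := fun t => g t - A * t ^ (N + 1))
    (f' := fun t => g' t - (N + 1) * A * t ^ N) (C := ε * ‖t‖ ^ N) (x := 0) (y := t)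
    (fun x hx => by
      have hx1 := (hball x (hsub x hx)).1
      have hx2 := ((hasDerivAt_pow (N + 1) x).const_mul A)
      refine (HasDerivAt.congr_deriv (hx1.sub hx2) ?_).hasDerivWithinAt
      rw [Nat.add_sub_cancel]
      push_cast
      ring)
    (fun x hx => by
      refine (hball x (hsub x hx)).2.trans ?_
      have : ‖x‖ ≤ ‖t‖ := by simpa using hx
      rw [norm_pow]
      gcongr)
    (by simp) (by simp)
  simp only [h0, sub_zero, ne_eq, Nat.succ_ne_zero, not_false_eq_true, zero_pow, mul_zero] at this
  rw [norm_pow, pow_succ ‖t‖, ← mul_assoc]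
  exact this

/-- A parametrized coordinate `φ(t) = c t ^ k + ...` has `φ'(t) = k c t ^ (k - 1) + ...`. -/
theorem exists_lead_deriv {φ : ℂ → ℂ} (ha : AnalyticAt ℂ φ 0) (h0 : φ 0 = 0)
    (hne : ¬∀ᶠ t in 𝓝 (0 : ℂ), φ t = 0) :
    ∃ k : ℕ, 0 < k ∧ ∃ c : ℂ, c ≠ 0 ∧ Lead (deriv φ) (k - 1) (k * c) := by
  obtain ⟨k, q, hq, hq0, he⟩ := ha.exists_eventuallyEq_pow_smul_nonzero_iff.2 hne
  simp only [sub_zero, smul_eq_mul] at he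
  have hk : 0 < k := by
    rcases Nat.eq_zero_or_pos k with rfl | h
    · exact absurd (by simpa [h0] using he.self_of_nhds.symm) hq0
    · exact h
  refine ⟨k, hk, q 0, hq0, ?_⟩
  obtain ⟨m, rfl⟩ : ∃ m, k = m + 1 := ⟨k - 1, by omega⟩
  have hd : (fun t => ((m : ℂ) + 1) * q t * t ^ m + t ^ (m + 1) * deriv q t)
      =ᶠ[𝓝 0] deriv φ := by
    have he' : φ =ᶠ[𝓝 0] fun t => t ^ (m + 1) * q t := he
    filter_upwards [he'.deriv, hq.eventually_analyticAt] with t ht hqt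
    have h1 : HasDerivAt (fun t => t ^ (m + 1) * q t) _ t :=
      (hasDerivAt_pow (m + 1) t).mul hqt.differentiableAt.hasDerivAt
    rw [ht, h1.deriv, Nat.add_sub_cancel]
    push_cast
    ring
  refine Lead.congr ?_ hd
  have hc : ContinuousAt (fun t => ((m : ℂ) + 1) * q t + t * deriv q t) 0 := by
    have h1 := hq.continuousAt
    have h2 := hq.deriv.continuousAt
    fun_prop
  have h1 := Lead.of_continuousAt hc
  have h2 : Lead (fun t : ℂ => t ^ m) m 1 := by
    simp [Lead]
  have h3 := h1.mul h2
  simp only [zero_mul, add_zero, mul_one, zero_add] at h3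
  push_cast
  exact h3.congr (Eventually.of_forall fun t => by ring)

/-! ### Weighted homogeneous parts -/

/-- The multi-indices of weighted degree `N`, for the weights `k`; all of them are listed when
the weights are positive. -/
def wset {n : ℕ} (k : Fin n → ℕ) (N : ℕ) : Finset (Fin n → ℕ) :=
  (Fintype.piFinset fun _ => Finset.range (N + 1)).filter fun ν => ∑ i, k i * ν i = N

theorem mem_wset {n : ℕ} {k : Fin n → ℕ} (hk : ∀ i, 0 < k i) {N : ℕ} {ν : Fin n → ℕ} :
    ν ∈ wset k N ↔ ∑ i, k i * ν i = N := by
  simp only [wset, Finset.mem_filter, Fintype.mem_piFinset, Finset.mem_range,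
    and_iff_right_iff_imp]
  intro h i
  have h1 : k i * ν i ≤ ∑ i, k i * ν i :=
    Finset.single_le_sum (f := fun i => k i * ν i) (fun _ _ => Nat.zero_le _) (mem_univ i)
  have h2 : ν i ≤ k i * ν i := Nat.le_mul_of_pos_left _ (hk i)
  omega

/-- The part of weighted degree `N` of the Taylor expansion of `f` at `0`. -/
noncomputable def homPart {n : ℕ} (k : Fin n → ℕ) (f : (Fin n → ℂ) → ℂ) (N : ℕ)
    (z : Fin n → ℂ) : ℂ :=
  ∑ ν ∈ wset k N, coeffOf f ν * ∏ i, z i ^ ν i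

/-- The part of weighted degree `N` of the Taylor expansion of `z_i ∂_i f` at `0`. -/
noncomputable def eulerPart {n : ℕ} (k : Fin n → ℕ) (f : (Fin n → ℂ) → ℂ) (N : ℕ)
    (i : Fin n) (z : Fin n → ℂ) : ℂ :=
  ∑ ν ∈ wset k N, ν i * (coeffOf f ν * ∏ j, z j ^ ν j)

theorem wdeg_add_single {n : ℕ} (k ν : Fin n → ℕ) (i : Fin n) :
    ∑ j, k j * (ν + Pi.single i 1 : Fin n → ℕ) j = ∑ j, k j * ν j + k i := by
  simp [mul_add, Finset.sum_add_distrib, Pi.single_apply]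

theorem monomial_add_single {n : ℕ} (z : Fin n → ℂ) (ν : Fin n → ℕ) (i : Fin n) :
    ∏ j, z j ^ (ν + Pi.single i 1 : Fin n → ℕ) j = z i * ∏ j, z j ^ ν j := by
  simp [pow_add, Finset.prod_mul_distrib, Pi.single_apply, mul_comm, pow_ite, -mul_ite]

theorem eulerPart_of_le {n : ℕ} {k : Fin n → ℕ} (hk : ∀ i, 0 < k i) {f : (Fin n → ℂ) → ℂ}
    (hf : AnalyticAt ℂ f 0) {N : ℕ} {i : Fin n} (hi : k i ≤ N) (z : Fin n → ℂ) :
    eulerPart k f N i z = z i * homPart k (pder i f) (N - k i) z := by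
  unfold eulerPart homPart
  rw [Finset.mul_sum]
  symm
  refine Finset.sum_of_injOn (fun ν => ν + Pi.single i 1) ?_ ?_ ?_ ?_
  · intro a _ b _ h
    exact add_right_cancel h
  · intro ν hν
    have hν := (mem_wset hk).1 (Finset.mem_coe.1 hν)
    refine Finset.mem_coe.2 ((mem_wset hk).2 ?_)
    rw [wdeg_add_single]
    omega
  · intro ν hν hn
    by_cases h0 : ν i = 0
    · simp [h0]
    · refine absurd ?_ hn
      have hsub : ν - Pi.single i 1 + Pi.single i 1 = ν := by
        refine tsub_add_cancel_of_le fun j => ?_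
        by_cases hj : j = i
        · subst hj; simp; omega
        · simp [hj]
      refine ⟨ν - Pi.single i 1, Finset.mem_coe.2 ((mem_wset hk).2 ?_), hsub⟩
      have h1 := wdeg_add_single k (ν - Pi.single i 1) i
      rw [hsub, (mem_wset hk).1 hν] at h1
      omega
  · intro ν hν
    rw [coeffOf_pder hf, monomial_add_single]
    simp only [Pi.add_apply, Pi.single_eq_same]
    push_cast
    ring

theorem eulerPart_of_lt {n : ℕ} {k : Fin n → ℕ} (hk : ∀ i, 0 < k i) (f : (Fin n → ℂ) → ℂ)
    {N : ℕ} {i : Fin n} (hi : N < k i) (z : Fin n → ℂ) : eulerPart k f N i z = 0 := by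
  refine Finset.sum_eq_zero fun ν hν => ?_
  have h := (mem_wset hk).1 hν
  have h1 : k i * ν i ≤ ∑ i, k i * ν i :=
    Finset.single_le_sum (f := fun i => k i * ν i) (fun _ _ => Nat.zero_le _) (mem_univ i)
  have h0 : ν i = 0 := by
    by_contra h0
    have := Nat.le_mul_of_pos_right (k i) (Nat.pos_of_ne_zero h0)
    omega
  simp [h0]

/-- Euler's identity for the weighted homogeneous parts. -/
theorem sum_eulerPart {n : ℕ} {k : Fin n → ℕ} (hk : ∀ i, 0 < k i) (f : (Fin n → ℂ) → ℂ)
    (N : ℕ) (z : Fin n → ℂ) : ∑ i, k i * eulerPart k f N i z = N * homPart k f N z := by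
  unfold eulerPart homPart
  simp only [Finset.mul_sum]
  rw [Finset.sum_comm]
  refine Finset.sum_congr rfl fun ν hν => ?_
  simp only [← mul_assoc, ← Finset.sum_mul]
  have h := (mem_wset hk).1 hν
  rw [← h]
  push_cast
  rfl

/-- The substitution of a curve with leading exponents `k` and leading coefficients `c` into a
germ of weighted order at least `N`: the coefficient of `t ^ N` is the value at `c` of the part of
weighted degree `N`. The proof is by induction on `N`, by the chain rule and Euler's identity. -/
theorem lead_comp {n : ℕ} {k : Fin n → ℕ} (hk : ∀ i, 0 < k i) {φ : Fin n → ℂ → ℂ}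
    {c : Fin n → ℂ} (ha : ∀ i, AnalyticAt ℂ (φ i) 0) (h0 : ∀ i, φ i 0 = 0)
    (hlead : ∀ i, Lead (deriv (φ i)) (k i - 1) (k i * c i)) (N : ℕ) :
    ∀ h : (Fin n → ℂ) → ℂ, AnalyticAt ℂ h 0 →
      (∀ ν, ∑ i, k i * ν i < N → mder ν h 0 = 0) →
      Lead (fun t => h fun j => φ j t) N (homPart k h N c) := by
  have hΦ0 : (fun j => φ j 0) = 0 := funext h0
  have hΦ : ContinuousAt (fun t j => φ j t) 0 :=
    continuousAt_pi.2 fun i => (ha i).continuousAt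
  have hcont : ∀ h : (Fin n → ℂ) → ℂ, AnalyticAt ℂ h 0 →
      Lead (fun t => h fun j => φ j t) 0 (h 0) := by
    intro h hh
    have : ContinuousAt (fun t => h fun j => φ j t) 0 :=
      ContinuousAt.comp (g := h) (f := fun t j => φ j t) (by rw [hΦ0]; exact hh.continuousAt) hΦ
    simpa only [hΦ0] using Lead.of_continuousAt this
  induction N using Nat.strong_induction_on with
  | _ N ih =>
  intro h hh hν
  rcases Nat.eq_zero_or_pos N with rfl | hN
  · have hw : wset k 0 = {0} := by
      ext ν
      rw [mem_wset hk, Finset.mem_singleton, Finset.sum_eq_zero_iff]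
      constructor
      · intro H
        funext i
        exact (Nat.mul_eq_zero.1 (H i (mem_univ i))).resolve_left (hk i).ne'
      · rintro rfl
        simp
    have : homPart k h 0 c = h 0 := by
      simp [homPart, hw, coeffOf, mder_zero]
    rw [this]
    exact hcont h hh
  obtain ⟨M, rfl⟩ : ∃ M, N = M + 1 := ⟨N - 1, by omega⟩
  have hd : ∀ᶠ t in 𝓝 0, HasDerivAt (fun t => h fun j => φ j t)
      (∑ i, pder i h (fun j => φ j t) * deriv (φ i) t) t := by
    have h1 : ∀ᶠ t in 𝓝 (0 : ℂ), AnalyticAt ℂ h fun j => φ j t := by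
      refine hΦ.eventually (p := fun y => AnalyticAt ℂ h y) ?_
      simp only [hΦ0]
      exact hh.eventually_analyticAt
    have h2 : ∀ᶠ t in 𝓝 (0 : ℂ), ∀ i, AnalyticAt ℂ (φ i) t :=
      eventually_all.2 fun i => (ha i).eventually_analyticAt
    filter_upwards [h1, h2] with t ht1 ht2
    have h3 : HasDerivAt (fun t j => φ j t) (fun i => deriv (φ i) t) t :=
      hasDerivAt_pi.2 fun i => (ht2 i).differentiableAt.hasDerivAt
    refine HasDerivAt.congr_deriv
      (ht1.differentiableAt.hasFDerivAt.comp_hasDerivAt t h3) ?_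
    conv_lhs => rw [pi_eq_sum_univ' (fun i => deriv (φ i) t)]
    rw [map_sum]
    refine Finset.sum_congr rfl fun i _ => ?_
    rw [map_smul, smul_eq_mul, mul_comm, pder]
  refine Lead.of_deriv hd ?_ ?_
  · rw [hΦ0, ← mder_zero h]
    exact hν 0 (by simp)
  have hsum := sum_eulerPart hk h (M + 1) c
  push_cast at hsum
  rw [← hsum]
  refine Lead.sum fun i _ => ?_
  have hki := hk i
  by_cases hi : k i ≤ M + 1
  · have hp := ih (M + 1 - k i) (by omega) (pder i h) (pder_analytic hh i) (by
      intro ν hdeg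
      rw [mder_pder hh]
      refine hν _ ?_
      rw [wdeg_add_single]
      omega)
    have := hp.mul (hlead i)
    rw [eulerPart_of_le hk hh hi]
    have e1 : M + 1 - k i + (k i - 1) = M := by omega
    rw [e1] at this
    convert this using 1
    ring
  · rw [eulerPart_of_lt hk h (by omega), mul_zero]
    exact ((hcont _ (pder_analytic hh i)).mul (hlead i)).of_lt (by omega)

/-! ### Faces of the Newton diagram -/

theorem mul_pder_homPart {n : ℕ} (k : Fin n → ℕ) (f : (Fin n → ℂ) → ℂ) (N : ℕ) (i : Fin n)
    (z : Fin n → ℂ) : z i * pder i (homPart k f N) z = eulerPart k f N i z := by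
  have hm : ∀ ν : Fin n → ℕ, HasFDerivAt (fun z : Fin n → ℂ => ∏ j, z j ^ ν j)
      (∑ j, (∏ l ∈ univ.erase j, z l ^ ν l) •
        ((ν j * z j ^ (ν j - 1)) • (ContinuousLinearMap.proj j : (Fin n → ℂ) →L[ℂ] ℂ))) z :=
    fun ν => HasFDerivAt.finsetProd fun j _ =>
      (hasDerivAt_pow (ν j) (z j)).comp_hasFDerivAt z (hasFDerivAt_apply j z)
  have hs : HasFDerivAt (homPart k f N) _ z :=
    HasFDerivAt.fun_sum fun ν (_ : ν ∈ wset k N) => (hm ν).const_mul (coeffOf f ν)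
  unfold pder eulerPart
  rw [hs.fderiv]
  simp only [_root_.sum_apply, _root_.smul_apply,
    ContinuousLinearMap.proj_apply, smul_eq_mul, Finset.mul_sum]
  refine Finset.sum_congr rfl fun ν _ => ?_
  rw [Finset.sum_eq_single i]
  · rw [← Finset.mul_prod_erase univ (fun j => z j ^ ν j) (mem_univ i)]
    rcases Nat.eq_zero_or_pos (ν i) with h | h
    · simp [h]
    · obtain ⟨m, hm⟩ : ∃ m, ν i = m + 1 := ⟨ν i - 1, by omega⟩
      simp only [hm, Pi.single_eq_same, Nat.add_sub_cancel, pow_succ]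
      ring
  · intro j _ hj
    simp [hj]
  · simp

/-- The face of the Newton diagram supported by the covector `k` carries the lowest weighted
homogeneous part of `f`. For `f` with empty support the face is empty, and `N = 0` will do. -/
theorem exists_facePoly_eq {n : ℕ} {k : Fin n → ℕ} (hk : ∀ i, 0 < k i)
    (f : (Fin n → ℂ) → ℂ) :
    ∃ N, (∀ ν, ∑ i, k i * ν i < N → mder ν f 0 = 0) ∧
      facePoly f (faceOf (fun i => (k i : ℝ)) (NDiag f)) = homPart k f N := by
  classical
  have hcoeff : ∀ ν, ν ∉ NSupp f → coeffOf f ν = 0 := by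
    intro ν hν
    have : mder ν f 0 = 0 := not_not.1 hν
    simp [coeffOf, this]
  have hmem : ∀ ν ∈ NSupp f, (fun i => (ν i : ℝ)) ∈ NDiag f := fun ν hν =>
    subset_convexHull ℝ _ ⟨ν, hν, fun i => le_rfl⟩
  -- Off the support the coefficients vanish, so only its points matter.
  have main : ∀ N, (∀ ν, (fun i => (ν i : ℝ)) ∈ faceOf (fun i => (k i : ℝ)) (NDiag f) →
      ν ∈ wset k N) → (∀ ν ∈ NSupp f, ν ∈ wset k N →
      (fun i => (ν i : ℝ)) ∈ faceOf (fun i => (k i : ℝ)) (NDiag f)) →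
      facePoly f (faceOf (fun i => (k i : ℝ)) (NDiag f)) = homPart k f N := by
    intro N h1 h2
    funext z
    unfold facePoly homPart
    have e := tsum_subtype
      {ν : Fin n → ℕ | (fun i => (ν i : ℝ)) ∈ faceOf (fun i => (k i : ℝ)) (NDiag f)}
      (fun ν => coeffOf f ν * ∏ i, z i ^ ν i)
    refine e.trans ?_
    rw [tsum_eq_sum (s := wset k N)]
    · refine Finset.sum_congr rfl fun ν hν => ?_
      by_cases hs : ν ∈ NSupp f
      · exact (Set.indicator_apply _ _ _).trans (if_pos (h2 ν hs hν))
      · simp [Set.indicator_apply, hcoeff ν hs]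
    · intro ν hν
      exact (Set.indicator_apply _ _ _).trans (if_neg fun h => hν (h1 ν h))
  by_cases hne : (NSupp f).Nonempty
  · obtain ⟨ν₀, hν₀, hmin⟩ : ∃ ν₀ ∈ NSupp f, ∀ ν ∈ NSupp f,
        ∑ i, k i * ν₀ i ≤ ∑ i, k i * ν i := by
      have hw : WellFounded (InvImage (· < ·) fun ν : Fin n → ℕ => ∑ i, k i * ν i) :=
        InvImage.wf _ wellFounded_lt
      exact ⟨hw.min _ hne, hw.min_mem _ hne, fun ν hν => not_lt.1 (hw.not_lt_min _ hν)⟩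
    have hge : ∀ v ∈ NDiag f, ((∑ i, k i * ν₀ i : ℕ) : ℝ) ≤ ∑ i, (k i : ℝ) * v i := by
      have hconv : Convex ℝ {v : Fin n → ℝ |
          ((∑ i, k i * ν₀ i : ℕ) : ℝ) ≤ ∑ i, (k i : ℝ) * v i} := by
        refine convex_halfSpace_ge ⟨fun x y => ?_, fun a x => ?_⟩ _
        · simp [mul_add, Finset.sum_add_distrib]
        · simp only [Pi.smul_apply, smul_eq_mul, Finset.mul_sum]
          exact Finset.sum_congr rfl fun i _ => by ring
      refine fun v hv => convexHull_min ?_ hconv hv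
      rintro x ⟨ν, hν, hx⟩
      calc ((∑ i, k i * ν₀ i : ℕ) : ℝ) ≤ ((∑ i, k i * ν i : ℕ) : ℝ) := by
            exact_mod_cast hmin ν hν
        _ = ∑ i, (k i : ℝ) * ν i := by push_cast; rfl
        _ ≤ ∑ i, (k i : ℝ) * x i :=
            Finset.sum_le_sum fun i _ => mul_le_mul_of_nonneg_left (hx i) (Nat.cast_nonneg _)
    have hell : ell (fun i => (k i : ℝ)) (NDiag f) = ((∑ i, k i * ν₀ i : ℕ) : ℝ) := by
      refine IsLeast.csInf_eq ⟨⟨_, hmem ν₀ hν₀, ?_⟩, ?_⟩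
      · push_cast; rfl
      · rintro _ ⟨v, hv, rfl⟩
        exact hge v hv
    refine ⟨∑ i, k i * ν₀ i, fun ν hν => ?_, main _ ?_ ?_⟩
    · by_contra h
      exact absurd (hmin ν h) (not_le.2 hν)
    · rintro ν ⟨_, h⟩
      rw [hell] at h
      rw [mem_wset hk]
      beta_reduce at h
      exact_mod_cast h
    · intro ν hs hν
      refine ⟨hmem ν hs, ?_⟩
      rw [hell, ← (mem_wset hk).1 hν]
      push_cast
      rfl
  · have hempty : NSupp f = ∅ := Set.not_nonempty_iff_eq_empty.1 hne
    refine ⟨0, fun ν hν => absurd hν (Nat.not_lt_zero _), main 0 ?_ ?_⟩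
    · rintro ν ⟨h, _⟩
      simp [NDiag, hempty] at h
    · intro ν hν
      simp [hempty] at hν

/-- if `f` is a nondegenerate singularity and `φ` a parametrization with all
coordinates nonzero, then `∇f ∘ φ ≠ 0` as a germ of a curve. -/
theorem stmt5 {n : ℕ} (hn : 2 ≤ n) (f : (Fin n → ℂ) → ℂ) (hf : IsSing f)
    (hnd : Nondeg f) (φ : Fin n → ℂ → ℂ) (hφ : IsParam φ) :
    ∃ i, ¬∀ᶠ t in 𝓝 (0 : ℂ), pder i f (fun j => φ j t) = 0 := by
  by_contra! hcon
  have hfa := hf.1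
  choose k hk c hc hlead using fun i => exists_lead_deriv (hφ i).1 (hφ i).2.1 (hφ i).2.2
  obtain ⟨N, hN, hface⟩ := exists_facePoly_eq hk f
  refine hnd _ ⟨fun i => (k i : ℝ), fun i => Nat.cast_pos.2 (hk i), rfl⟩ ⟨c, hc, fun i => ?_⟩
  rw [hface]
  refine (mul_eq_zero.1 ?_).resolve_left (hc i)
  rw [mul_pder_homPart]
  rcases lt_or_ge N (k i) with hi | hi
  · exact eulerPart_of_lt hk f hi c
  · rw [eulerPart_of_le hk hfa hi]
    have hl := lead_comp hk (fun i => (hφ i).1) (fun i => (hφ i).2.1) hlead (N - k i)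
      (pder i f) (pder_analytic hfa i) (by
        intro ν hν
        rw [mder_pder hfa]
        refine hN _ ?_
        rw [wdeg_add_single]
        omega)
    rw [hl.eq_zero (hcon i), mul_zero]
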